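/- Let k be a field, q ∈ k and n ≥ 1 an integer such that (m)_q ≠ 0 for all 1 ≤ m ≤ n. Let A be a unital associative k-algebra and x, y ∈ A such that y^{(v−1)}·y^{(u−1)} = q^v·y^{(u−1)}·y^{(v−1)} for all integers 1 ≤ u < v. Then (x+y)^n = Σ ((n)_q! / ((∏_{i=1}^{n} ((i)_q!)^{t_i}·(t_i)_{q^i}!)·(t)_q!)) · y^{t₁}·(y^{(1)})^{t₂}⋯(y^{(n−1)})^{tₙ}·x^{t}, where the sum is over all (t₁, …, tₙ, t) ∈ ℕ^{n+1} with t₁ + 2t₂ + ⋯ + n·tₙ + t = n (under the hypothesis on q all the denominators are nonzero elements of k). -/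

import Mathlib

/-- The q-integer `(m)_q = 1 + q + ⋯ + q^{m−1}`. -/
def qInt {k : Type*} [CommRing k] (q : k) (m : ℕ) : k := ∑ i ∈ Finset.range m, q ^ i

/-- The q-factorial `(m)_q! = (1)_q (2)_q ⋯ (m)_q`. -/
def qFact {k : Type*} [CommRing k] (q : k) : ℕ → k
  | 0 => 1
  | m + 1 => qFact q m * qInt q (m + 1)

/-- `y^{(0)} = y`, `y^{(m)} = x·y^{(m−1)} − q^m·y^{(m−1)}·x`. -/
def yd {k A : Type*} [CommRing k] [Ring A] [Algebra k A] (q : k) (x y : A) : ℕ → A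
  | 0 => y
  | m + 1 => x * yd q x y m - q ^ (m + 1) • (yd q x y m * x)


theorem yd_comm {k A : Type*} [CommRing k] [Ring A] [Algebra k A] (q : k) (x y : A) (m : ℕ) :
    x * yd q x y m = yd q x y (m + 1) + q ^ (m + 1) • (yd q x y m * x) := by
  simp [yd]

theorem qInt_succ {k : Type*} [CommRing k] (q : k) (m : ℕ) :
    qInt q (m + 1) = 1 + q * qInt q m := by
  simp [qInt, Finset.sum_range_succ', Finset.mul_sum, pow_succ, add_comm, mul_comm]

theorem qInt_add {k : Type*} [CommRing k] (q : k) (a b : ℕ) :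
    qInt q (a + b) = qInt q a + q ^ a * qInt q b := by
  simp [qInt, Finset.sum_range_add, Finset.mul_sum, pow_add]

theorem qInt_mul {k : Type*} [CommRing k] (q : k) (a b : ℕ) :
    qInt q (a * b) = qInt q a * qInt (q ^ a) b := by
  induction b with
  | zero => simp [qInt]
  | succ b ih =>
    rw [Nat.mul_succ, qInt_add, ih]
    have : qInt (q ^ a) (b + 1) = qInt (q ^ a) b + (q ^ a) ^ b := by
      simp [qInt, Finset.sum_range_succ]
    rw [this, pow_mul]; ring

theorem pow_comm_aux {k A : Type*} [CommRing k] [Ring A] [Algebra k A] (a : k) (x y z : A)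
    (h1 : x * y = z + a • (y * x)) (t : ℕ) (h2 : 1 ≤ t → z * y = a ^ 2 • (y * z)) :
    x * y ^ (t + 1) = (a ^ t * qInt a (t + 1)) • (y ^ t * z) + a ^ (t + 1) • (y ^ (t + 1) * x) := by
  induction t with
  | zero => simp [h1, qInt]
  | succ t ih =>
    have h2' := h2 (by omega)
    have ih' := ih (fun _ => h2')
    rw [pow_succ y (t + 1), ← mul_assoc, ih', add_mul, smul_mul_assoc, smul_mul_assoc,
      mul_assoc (y ^ t), h2', mul_assoc (y ^ (t + 1)) x y, h1, qInt_succ a (t + 1)]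
    simp only [mul_add, mul_smul_comm, smul_add, smul_smul, ← mul_assoc, ← pow_succ]
    rw [← add_assoc, ← add_smul]
    congr 2
    ring

theorem yd_zero_aux {k A : Type*} [Field k] [Ring A] [Algebra k A]
    (q : k) (n : ℕ) (hq : ∀ m : ℕ, 1 ≤ m → m ≤ n → qInt q m ≠ 0) (x y : A)
    (h : ∀ u v : ℕ, u < v →
      yd q x y v * yd q x y u = q ^ (v + 1) • (yd q x y u * yd q x y v))
    (h0 : q ≠ 0) (h1 : q ≠ 1) (u : ℕ) :
    ∀ v, u + 1 < v → u + v + 3 ≤ n → yd q x y (u + 1) * yd q x y v = 0 := by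
  have key : ∀ u v : ℕ, u + 1 < v → (1 - q ^ (v + 1)) • (yd q x y (u + 1) * yd q x y v) =
      (q * (1 - q ^ u)) • (yd q x y u * yd q x y (v + 1)) := by
    intro u v huv
    have e := congrArg (fun w => x * w) (h u v (by omega))
    simp only [mul_smul_comm, ← mul_assoc, yd_comm, add_mul, smul_mul_assoc] at e
    simp only [mul_assoc, yd_comm, mul_add, mul_smul_comm] at e
    rw [h u (v + 1) (by omega), h (u + 1) v huv] at e
    have e3 : yd q x y v * (yd q x y u * x) = q ^ (v + 1) • (yd q x y u * (yd q x y v * x)) := by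
      rw [← mul_assoc, h u v (by omega), smul_mul_assoc, mul_assoc]
    rw [e3] at e
    have hne : q ^ (v + 1) ≠ 0 := pow_ne_zero _ h0
    refine smul_right_injective A hne ?_
    simp only
    generalize yd q x y u * yd q x y (v + 1) = P at *
    generalize yd q x y (u + 1) * yd q x y v = Q at *
    generalize yd q x y u * (yd q x y v * x) = R at *
    have : q ^ (v + 1) • (1 - q ^ (v + 1)) • Q - q ^ (v + 1) • (q * (1 - q ^ u)) • P = 0 := by
      rw [← sub_eq_zero] at e
      rw [← neg_eq_zero, ← e]
      module
    exact sub_eq_zero.mp this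
  have hne : ∀ v, v + 1 ≤ n → (1 - q ^ (v + 1)) ≠ 0 := by
    intro v hv
    have := geom_sum_mul q (v + 1)
    have h2 := hq (v + 1) (by omega) hv
    unfold qInt at h2
    intro h3
    have : (∑ i ∈ Finset.range (v + 1), q ^ i) * (q - 1) = 0 := by
      rw [this]; linear_combination -h3
    rcases mul_eq_zero.mp this with h4 | h4
    · exact h2 h4
    · exact h1 (sub_eq_zero.mp h4)
  induction u with
  | zero =>
    intro v hv hn
    have := key 0 v hv
    simp only [pow_zero, sub_self, mul_zero, zero_smul] at this
    exact (smul_eq_zero_iff_right (hne v (by omega))).mp this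
  | succ u ih =>
    intro v hv hn
    have := key (u + 1) v hv
    rw [ih (v + 1) (by omega) (by omega), smul_zero] at this
    exact (smul_eq_zero_iff_right (hne v (by omega))).mp this

theorem yd_comm2 {k A : Type*} [Field k] [Ring A] [Algebra k A]
    (q : k) (n : ℕ) (hq : ∀ m : ℕ, 1 ≤ m → m ≤ n → qInt q m ≠ 0) (x y : A)
    (h : ∀ u v : ℕ, u < v →
      yd q x y v * yd q x y u = q ^ (v + 1) • (yd q x y u * yd q x y v))
    (i : ℕ) (hi : 2 * i + 3 ≤ n) :
    yd q x y (i + 1) * yd q x y i = (q ^ (i + 1)) ^ 2 • (yd q x y i * yd q x y (i + 1)) := by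
  rw [h i (i + 1) (by omega)]
  by_cases h0 : q = 0
  · subst h0; simp
  by_cases h1 : q = 1
  · subst h1; simp
  rcases i with _ | i
  · simp
  · rw [yd_zero_aux q n hq x y h h0 h1 i (i + 1 + 1) (by omega) (by omega)]; simp

/-- coefficient -/
def qa {k : Type*} [Field k] (q : k) (m t : ℕ) : k := (qFact q m ^ t * qFact (q ^ m) t)⁻¹

/-- truncated product of q-exponentials, degree `N` part -/
def GG {k A : Type*} [Field k] [Ring A] [Algebra k A] (q : k) (x y : A) (K : ℕ) :
    ℕ → ℕ → ℤ → A
  | 0, _, N => if N < 0 then 0 else (qFact q N.toNat)⁻¹ • x ^ N.toNat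
  | r + 1, s, N => ∑ t ∈ Finset.range K,
      qa q (s + 1) t • (yd q x y s ^ t * GG q x y K r (s + 1) (N - ((s + 1) * t : ℕ)))

theorem GG_neg {k A : Type*} [Field k] [Ring A] [Algebra k A] (q : k) (x y : A) (K r : ℕ) :
    ∀ (s : ℕ) (N : ℤ), N < 0 → GG q x y K r s N = 0 := by
  induction r with
  | zero => intro s N h; simp [GG, h]
  | succ r ih =>
    intro s N h
    simp only [GG]
    refine Finset.sum_eq_zero fun t _ => ?_
    rw [ih _ _ (by omega)]; simp

theorem GG_rec {k A : Type*} [Field k] [Ring A] [Algebra k A]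
    (q : k) (n : ℕ) (hq : ∀ m : ℕ, 1 ≤ m → m ≤ n → qInt q m ≠ 0) (x y : A)
    (h : ∀ u v : ℕ, u < v →
      yd q x y v * yd q x y u = q ^ (v + 1) • (yd q x y u * yd q x y v)) (r : ℕ) :
    ∀ (s : ℕ) (N : ℤ), r + s = n → N + 1 ≤ n →
      x * GG q x y (n + 2) r s N = qInt q (N + 1).toNat • GG q x y (n + 2) r s (N + 1)
        - (qFact q s)⁻¹ • (yd q x y s * GG q x y (n + 2) r s (N - s)) := by
  induction r with
  | zero =>
    intro s N hs hN
    rw [GG_neg q x y _ _ _ (N - s) (by omega)]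
    by_cases hN0 : N < 0
    · rw [GG_neg q x y _ _ _ N hN0]
      by_cases hN1 : N + 1 < 0
      · rw [GG_neg q x y _ _ _ _ hN1]; simp
      · have : N + 1 = 0 := by omega
        rw [this]; simp [qInt]
    · obtain ⟨M, rfl⟩ := Int.eq_ofNat_of_zero_le (not_lt.mp hN0)
      have e : ((M : ℤ) + 1) = ((M + 1 : ℕ) : ℤ) := by push_cast; rfl
      rw [e]
      simp only [GG, Int.toNat_natCast]
      rw [if_neg (by omega), if_neg (by omega)]
      have := hq (M + 1) (by omega) (by omega)
      simp only [mul_zero, smul_zero, sub_zero, mul_smul_comm, smul_smul, ← pow_succ', qFact]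
      rw [mul_inv, mul_comm, mul_assoc, inv_mul_cancel₀ this, mul_one]
  | succ r ih =>
    intro s N hs hN
    set Y := yd q x y s with hY
    set Z := yd q x y (s + 1) with hZ
    set G := GG q x y (n + 2) r (s + 1) with hG
    have Gneg : ∀ M : ℤ, M < 0 → G M = 0 := fun M hM => GG_neg q x y _ _ _ M hM
    have IH : ∀ M : ℤ, M + 1 ≤ n → x * G M = qInt q (M + 1).toNat • G (M + 1)
        - (qFact q (s + 1))⁻¹ • (Z * G (M - ((s + 1 : ℕ) : ℤ))) :=
      fun M hM => ih (s + 1) M (by omega) hM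
    have hGG : ∀ M, GG q x y (n + 2) (r + 1) s M = ∑ t ∈ Finset.range (n + 2),
      qa q (s + 1) t • (Y ^ t * G (M - ((s + 1) * t : ℕ))) := fun M => rfl
    rw [hGG, hGG, hGG]
    have hs1 : qInt q (s + 1) ≠ 0 := hq _ (by omega) (by omega)
    have hmul : ∀ t, 1 ≤ t → (s + 1) * t ≤ n → qInt (q ^ (s + 1)) t ≠ 0 := by
      intro t ht htn h0
      refine hq ((s + 1) * t) (Nat.mul_pos (by omega) ht) htn ?_
      rw [qInt_mul, h0, mul_zero]
    -- coefficients
    have ha : ∀ t, (s + 1) * (t + 1) ≤ n →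
        qa q (s + 1) (t + 1) * qInt (q ^ (s + 1)) (t + 1) =
          (qFact q (s + 1))⁻¹ * qa q (s + 1) t := by
      intro t ht
      have := hmul (t + 1) (by omega) ht
      simp only [qa, qFact.eq_2 (q ^ (s + 1)), pow_succ (qFact q (s + 1)), mul_inv]
      field_simp
    have ha' : ∀ t, (s + 1) * (t + 1) ≤ n →
        qa q (s + 1) (t + 1) * qInt q ((s + 1) * (t + 1)) = (qFact q s)⁻¹ * qa q (s + 1) t := by
      intro t ht
      rw [qInt_mul, mul_left_comm, ha t ht, qFact, mul_inv]
      field_simp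
    -- the commutation
    have hx : ∀ t, x * (Y ^ t * G (N - ((s + 1) * t : ℕ))) =
        (if t = 0 then 0 else ((q ^ (s + 1)) ^ (t - 1) * qInt (q ^ (s + 1)) t) •
          (Y ^ (t - 1) * Z * G (N - ((s + 1) * t : ℕ)))) +
        (q ^ (s + 1)) ^ t • (Y ^ t * (x * G (N - ((s + 1) * t : ℕ)))) := by
      intro t
      by_cases hneg : N - ((s + 1) * t : ℕ) < 0
      · rw [Gneg _ hneg]; simp
      rcases t with _ | t
      · simp
      · rw [← mul_assoc, pow_comm_aux (q ^ (s + 1)) x Y Z (yd_comm q x y s) t]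
        · simp [add_mul, mul_assoc]
        · intro ht
          refine yd_comm2 q n hq x y h s ?_
          have : (s + 1) * 2 ≤ (s + 1) * (t + 1) := Nat.mul_le_mul_left _ (by omega)
          omega
    have big : ∀ t, n + 1 ≤ t → n + 1 ≤ (s + 1) * t := by
      intro t ht; nlinarith
    -- left side
    have L : x * ∑ t ∈ Finset.range (n + 2), qa q (s + 1) t • (Y ^ t * G (N - ((s + 1) * t : ℕ))) =
        ∑ t ∈ Finset.range (n + 2), (qa q (s + 1) t * (q ^ (s + 1)) ^ t *
          qInt q (N - ((s + 1) * t : ℕ) + 1).toNat) •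
            (Y ^ t * G (N + 1 - ((s + 1) * t : ℕ))) := by
      have step : ∀ t, x * (qa q (s + 1) t • (Y ^ t * G (N - ((s + 1) * t : ℕ)))) =
          (if t = 0 then 0 else (qa q (s + 1) t * ((q ^ (s + 1)) ^ (t - 1) *
            qInt (q ^ (s + 1)) t)) • (Y ^ (t - 1) * Z * G (N - ((s + 1) * t : ℕ)))) +
          ((qa q (s + 1) t * (q ^ (s + 1)) ^ t *
            qInt q (N - ((s + 1) * t : ℕ) + 1).toNat) •
            (Y ^ t * G (N + 1 - ((s + 1) * t : ℕ))) -
          (qa q (s + 1) t * (q ^ (s + 1)) ^ t * (qFact q (s + 1))⁻¹) •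
            (Y ^ t * Z * G (N - ((s + 1) * (t + 1) : ℕ)))) := by
        intro t
        rw [mul_smul_comm, hx, IH _ (by omega)]
        have e1 : N - (((s + 1) * t : ℕ) : ℤ) + 1 = N + 1 - (((s + 1) * t : ℕ) : ℤ) := by ring
        have e2 : N - (((s + 1) * t : ℕ) : ℤ) - ((s + 1 : ℕ) : ℤ) =
          N - (((s + 1) * (t + 1) : ℕ) : ℤ) := by push_cast; ring
        rw [e1, e2]
        split_ifs <;>
        simp only [smul_add, mul_sub, smul_sub, mul_smul_comm, smul_smul, mul_assoc, smul_zero]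
      rw [Finset.mul_sum, Finset.sum_congr rfl (fun t _ => step t), Finset.sum_add_distrib,
        Finset.sum_sub_distrib]
      have sh : ∑ t ∈ Finset.range (n + 2), (if t = 0 then 0 else (qa q (s + 1) t *
          ((q ^ (s + 1)) ^ (t - 1) *
            qInt (q ^ (s + 1)) t)) • (Y ^ (t - 1) * Z * G (N - ((s + 1) * t : ℕ)))) =
          ∑ t ∈ Finset.range (n + 2), (qa q (s + 1) t * (q ^ (s + 1)) ^ t *
            (qFact q (s + 1))⁻¹) • (Y ^ t * Z * G (N - ((s + 1) * (t + 1) : ℕ))) := by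
        rw [Finset.sum_range_succ', Finset.sum_range_succ _ (n + 1)]
        have := big (n + 1 + 1) (by omega)
        rw [Gneg (N - ((s + 1) * (n + 1 + 1) : ℕ)) (by omega)]
        simp only [if_true, mul_zero, smul_zero, add_zero]
        refine Finset.sum_congr rfl fun t _ => ?_
        rw [if_neg (by omega), Nat.add_sub_cancel]
        by_cases hneg : N - ((s + 1) * (t + 1) : ℕ) < 0
        · rw [Gneg _ hneg]; simp
        · congr 1
          have := ha t (by omega)
          linear_combination (q ^ (s + 1)) ^ t * this
      rw [sh]; abel
    rw [L]
    -- right side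
    have R : (qFact q s)⁻¹ • (Y * ∑ t ∈ Finset.range (n + 2),
        qa q (s + 1) t • (Y ^ t * G (N - s - ((s + 1) * t : ℕ)))) =
        ∑ t ∈ Finset.range (n + 2), (qa q (s + 1) t * qInt q ((s + 1) * t)) •
          (Y ^ t * G (N + 1 - ((s + 1) * t : ℕ))) := by
      rw [Finset.sum_range_succ _ (n + 1), Finset.sum_range_succ' _ (n + 1)]
      have := big (n + 1) (by omega)
      rw [Gneg (N - s - ((s + 1) * (n + 1) : ℕ)) (by omega)]
      have q0 : qInt q 0 = 0 := by simp [qInt]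
      simp only [mul_zero, smul_zero, add_zero, q0, zero_smul, Finset.mul_sum, Finset.smul_sum]
      refine Finset.sum_congr rfl fun t _ => ?_
      have e2 : N - (s : ℤ) - (((s + 1) * t : ℕ) : ℤ) =
          N + 1 - (((s + 1) * (t + 1) : ℕ) : ℤ) := by push_cast; ring
      rw [e2]
      by_cases hneg : N + 1 - ((s + 1) * (t + 1) : ℕ) < 0
      · rw [Gneg _ hneg]; simp
      · rw [ha' t (by omega), mul_smul_comm, smul_smul, ← mul_assoc, ← pow_succ']
    rw [R, Finset.smul_sum, ← Finset.sum_sub_distrib]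
    refine Finset.sum_congr rfl fun t _ => ?_
    by_cases hneg : N + 1 - ((s + 1) * t : ℕ) < 0
    · rw [Gneg _ hneg]; simp
    · rw [smul_smul, ← sub_smul]
      congr 1
      obtain ⟨M, hM⟩ := Int.eq_ofNat_of_zero_le (not_lt.mp hneg)
      have e1 : N - (((s + 1) * t : ℕ) : ℤ) + 1 = (M : ℤ) := by omega
      have e2 : N + 1 = (((s + 1) * t + M : ℕ) : ℤ) := by push_cast; push_cast at hM; linarith
      rw [e1, e2, Int.toNat_natCast, Int.toNat_natCast, qInt_add, pow_mul]
      ring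

theorem GG_expand {k A : Type*} [Field k] [Ring A] [Algebra k A] (q : k) (x y : A) (K r : ℕ) :
    ∀ (s : ℕ) (N : ℤ), GG q x y K r s N = ∑ f : Fin r → Fin K,
      (∏ i : Fin r, qa q (s + i.val + 1) (f i)) •
        ((List.ofFn fun i : Fin r => yd q x y (s + i.val) ^ (f i).val).prod *
          GG q x y K 0 0 (N - (∑ i : Fin r, (s + i.val + 1) * (f i).val : ℕ))) := by
  induction r with
  | zero => intro s N; simp [GG]
  | succ r ih =>
    intro s N
    rw [← (Fin.consEquiv (fun _ : Fin (r + 1) => Fin K)).sum_comp, Fintype.sum_prod_type]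
    simp only [GG.eq_2]
    rw [Finset.sum_range]
    refine Finset.sum_congr rfl fun t _ => ?_
    rw [ih, Finset.mul_sum, Finset.smul_sum]
    refine Finset.sum_congr rfl fun f _ => ?_
    simp only [Fin.consEquiv, Equiv.coe_fn_mk, Fin.prod_univ_succ, Fin.sum_univ_succ,
      List.ofFn_succ, Fin.cons_zero, Fin.cons_succ, List.prod_cons, Fin.val_zero, Fin.val_succ,
      add_zero, mul_smul_comm, smul_smul, mul_assoc]
    have e : ∀ i : Fin r, s + 1 + i.val = s + (i.val + 1) := fun i => by omega
    simp only [e, Nat.cast_add, sub_sub]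

theorem GG_pow {k A : Type*} [Field k] [Ring A] [Algebra k A]
    (q : k) (n : ℕ) (hq : ∀ m : ℕ, 1 ≤ m → m ≤ n → qInt q m ≠ 0) (x y : A)
    (h : ∀ u v : ℕ, u < v →
      yd q x y v * yd q x y u = q ^ (v + 1) • (yd q x y u * yd q x y v)) (N : ℕ) (hN : N ≤ n) :
    (x + y) ^ N = qFact q N • GG q x y (n + 2) n 0 N := by
  induction N with
  | zero =>
    have : ∀ r s, GG q x y (n + 2) r s 0 = 1 := by
      intro r
      induction r with
      | zero => intro s; simp [GG, qFact]
      | succ r ih =>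
        intro s
        simp only [GG]
        rw [Finset.sum_range_succ', Finset.sum_eq_zero]
        · simp [ih, qa, qFact]
        · intro t _
          have : 0 < (s + 1) * (t + 1) := by positivity
          rw [GG_neg _ _ _ _ _ _ _ (by omega)]; simp
    simp [qFact, this]
  | succ N ih =>
    have := GG_rec q n hq x y h n 0 N (by omega) (by omega)
    have e : ((N : ℤ) + 1) = ((N + 1 : ℕ) : ℤ) := by push_cast; rfl
    rw [e, Int.toNat_natCast] at this
    simp only [qFact, inv_one, one_smul, yd, Nat.cast_zero, sub_zero] at this
    rw [pow_succ', ih (by omega), mul_smul_comm, add_mul, this, sub_add_cancel, smul_smul, qFact]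

/-- The q-commutative binomial formula (Corollary
`cor:binom-q-comm-Bell-diff-poly`): if `y^{(v−1)} y^{(u−1)} = q^v y^{(u−1)} y^{(v−1)}`
for `1 ≤ u < v`, then `(x+y)^n` expands with q-multinomial coefficients. -/
theorem stmt_15 {k A : Type*} [Field k] [Ring A] [Algebra k A]
    (q : k) (n : ℕ) (hn : 1 ≤ n)
    (hq : ∀ m : ℕ, 1 ≤ m → m ≤ n → qInt q m ≠ 0)
    (x y : A)
    (hcom : ∀ u v : ℕ, 1 ≤ u → u < v →
      yd q x y (v - 1) * yd q x y (u - 1) = q ^ v • (yd q x y (u - 1) * yd q x y (v - 1))) :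
    (x + y) ^ n =
      ∑ᶠ p ∈ {p : (Fin n → ℕ) × ℕ | (∑ i, (i.val + 1) * p.1 i) + p.2 = n},
        (qFact q n /
            ((∏ i : Fin n, (qFact q (i.val + 1) ^ p.1 i * qFact (q ^ (i.val + 1)) (p.1 i))) *
              qFact q p.2)) •
          ((List.ofFn fun i : Fin n => yd q x y i.val ^ p.1 i).prod * x ^ p.2) := by
  have h : ∀ u v : ℕ, u < v →
      yd q x y v * yd q x y u = q ^ (v + 1) • (yd q x y u * yd q x y v) := by
    intro u v huv
    simpa using hcom (u + 1) (v + 1) (by omega) (by omega)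
  rw [GG_pow q n hq x y h n le_rfl, GG_expand]
  set w : (Fin n → Fin (n + 2)) → ℕ := fun f => ∑ i : Fin n, (i.val + 1) * (f i).val with hw
  set g : (Fin n → Fin (n + 2)) → (Fin n → ℕ) × ℕ := fun f => (fun i => (f i).val, n - w f)
    with hg
  have ginj : Function.Injective g := by
    intro f f' hff
    have h1 := congrArg Prod.fst hff
    funext i
    exact Fin.ext (congrFun h1 i)
  classical
  have hset : {p : (Fin n → ℕ) × ℕ | (∑ i, (i.val + 1) * p.1 i) + p.2 = n} =
      ((Finset.univ.filter fun f => w f ≤ n).image g : Finset ((Fin n → ℕ) × ℕ)) := by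
    ext p
    simp only [Set.mem_ofPred_eq, Finset.coe_image, Finset.coe_filter, Finset.mem_univ, true_and,
      Set.mem_image]
    constructor
    · intro hp
      have hb : ∀ i, p.1 i < n + 2 := by
        intro i
        have h1 : (i.val + 1) * p.1 i ≤ ∑ i, (i.val + 1) * p.1 i :=
          Finset.single_le_sum (f := fun i : Fin n => (i.val + 1) * p.1 i)
            (fun _ _ => Nat.zero_le _) (Finset.mem_univ i)
        nlinarith
      refine ⟨fun i => ⟨p.1 i, hb i⟩, ?_, ?_⟩
      · simp only [hw]; omega
      · refine Prod.ext rfl ?_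
        simp only [hg, hw]; omega
    · rintro ⟨f, hf, rfl⟩
      change w f + (n - w f) = n
      omega
  rw [hset, finsum_mem_coe_finset, Finset.sum_image (fun a _ b _ hab => ginj hab),
    Finset.sum_filter, Finset.smul_sum]
  refine Finset.sum_congr rfl fun f _ => ?_
  simp only [zero_add]
  change qFact q n • (∏ i : Fin n, qa q (i.val + 1) (f i)) •
    (_ * GG q x y (n + 2) 0 0 ((n : ℤ) - (w f : ℕ))) = _
  split_ifs with hf
  · have e : (n : ℤ) - (w f : ℕ) = ((n - w f : ℕ) : ℤ) := by omega
    rw [e]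
    simp only [GG, Int.toNat_natCast]
    rw [if_neg (by omega)]
    simp only [mul_smul_comm, smul_smul, hg, qa, Finset.prod_inv_distrib, div_eq_mul_inv]
    congr 1
    rw [mul_inv]
  · rw [GG_neg _ _ _ _ _ _ _ (by omega)]; simp
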